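/- arXiv:2309.08093 — 2 statements merged into one kernel-verified Lean document; each statement's English description precedes it below -/
import Mathlib

section
/- Let $S_1 \in \mathbb{R}^{m \times n_1}$ and $S_2 \in \mathbb{R}^{m \times n_2}$ be CountSketch matrices with hash maps $h_1, h_2$ and sign vectors $v_1, v_2$, and let $S \in \mathbb{R}^{m \times n_1 n_2}$ be the TensorSketch matrix generated by $S_1$ and $S_2$ (i.e., the CountSketch-type matrix with hash map $h(i_1,i_2) = ((h_1(i_1)+h_2(i_2)-2) \bmod m)+1$ and sign $v(i_1,i_2)=v_1(i_1)v_2(i_2)$, column index $i = i_1 + (i_2-1)n_1$). Then $S = F^{-1}\,[(F S_2) \,\square\, (F S_1)]$, where $F \in \mathbb{C}^{m \times m}$ is the (invertible) discrete Fourier transform matrix; equivalently, $(F S)(s, i) = (F S_2)(s, i_2)\,(F S_1)(s, i_1)$ for all $s \in [m]$ and all $(i_1,i_2) \in [n_1]\times[n_2]$. -/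
/-!
Row `s` of `F` is the additive character `t ↦ w ^ (s * t)` of `ℤ/m`, and the column of a sketch at
`i` has its single entry in row `h i`. Hence `(F S)(s, i) = F(s, h i) v(i)`, and for the hash
`h₁ i₁ + h₂ i₂` modulo `m` the character splits this into a product. The matrix `F` is a
Vandermonde matrix with distinct nodes `w ^ s`, so it can be cancelled.
-/

open Matrix Complex

noncomputable def dft (m : ℕ) : Matrix (Fin m) (Fin m) ℂ :=
  Matrix.of fun s t : Fin m =>
    Complex.exp (-2 * Real.pi * Complex.I * ((s : ℕ) : ℂ) * ((t : ℕ) : ℂ) / (m : ℂ))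

def countSketch {m : ℕ} {ι : Type*} (h : ι → Fin m) (v : ι → ℝ) :
    Matrix (Fin m) ι ℝ :=
  Matrix.of fun j i => if h i = j then v i else 0

def faceSplit {μ n₁ n₂ α : Type*} [Mul α] (D : Matrix μ n₂ α) (C : Matrix μ n₁ α) :
    Matrix μ (n₁ × n₂) α :=
  Matrix.of fun s i => D s i.2 * C s i.1

def hashPair {m : ℕ} [NeZero m] {ι₁ ι₂ : Type*} (h₁ : ι₁ → Fin m) (h₂ : ι₂ → Fin m) :
    ι₁ × ι₂ → Fin m :=
  fun i => ⟨((h₁ i.1 : ℕ) + (h₂ i.2 : ℕ)) % m, Nat.mod_lt _ (Nat.pos_of_ne_zero (NeZero.ne m))⟩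

def hashFam {m : ℕ} [NeZero m] {q : ℕ} {n : Fin q → ℕ} (h : ∀ k, Fin (n k) → Fin m) :
    (∀ k, Fin (n k)) → Fin m :=
  fun i => ⟨(∑ k, (h k (i k) : ℕ)) % m, Nat.mod_lt _ (Nat.pos_of_ne_zero (NeZero.ne m))⟩

def ttChain (r n : ℕ → ℕ) {α : Type*} [Semiring α]
    (G : (j : ℕ) → Fin (n j) → Matrix (Fin (r j)) (Fin (r (j + 1))) α) :
    (p : ℕ) → ((j : Fin p) → Fin (n j)) → Matrix (Fin (r 0)) (Fin (r p)) α
  | 0, _ => 1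
  | p + 1, i => ttChain r n G p (fun j => i j.castSucc) * G p (i (Fin.last p))

/-- The root of unity `w = e^{-2πi/m}` generating the entries of the DFT matrix, written as the
inverse of Mathlib's standard primitive root; the value at `m = 0` is the junk value `1`. -/
noncomputable def dftRoot (m : ℕ) : ℂ :=
  (exp (2 * Real.pi * I / m))⁻¹

/-- The TensorSketch matrix generated by the CountSketch matrices with hash maps `h₁`, `h₂` and
weights `v₁`, `v₂`. Its columns are indexed by pairs `(i₁, i₂)` rather than by
`i₁ + (i₂ - 1) n₁`, and the weights may be any real numbers. -/
def tensorSketch {m : ℕ} [NeZero m] {ι₁ ι₂ : Type*} (h₁ : ι₁ → Fin m) (h₂ : ι₂ → Fin m)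
    (v₁ : ι₁ → ℝ) (v₂ : ι₂ → ℝ) : Matrix (Fin m) (ι₁ × ι₂) ℝ :=
  countSketch (hashPair h₁ h₂) fun i => v₁ i.1 * v₂ i.2

theorem pow_val_add_of_pow_eq_one {M : Type*} [Monoid M] {m : ℕ} {a : M} (ha : a ^ m = 1)
    (t u : Fin m) : a ^ (t + u : Fin m).val = a ^ t.val * a ^ u.val := by
  rw [Fin.val_add, ← pow_eq_pow_mod _ ha, pow_add]

theorem det_vandermonde_pow_ne_zero_of_isPrimitiveRoot {R : Type*} [CommRing R] [IsDomain R]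
    {m : ℕ} {w : R} (hw : IsPrimitiveRoot w m) :
    (vandermonde fun s : Fin m => w ^ s.val).det ≠ 0 :=
  det_vandermonde_ne_zero_iff.mpr fun s t hst => Fin.ext (hw.pow_inj s.isLt t.isLt hst)

section DFT

variable {m : ℕ}

theorem isPrimitiveRoot_dftRoot [NeZero m] : IsPrimitiveRoot (dftRoot m) m :=
  (isPrimitiveRoot_exp m (NeZero.ne m)).inv

theorem dft_apply (s t : Fin m) : dft m s t = (dftRoot m ^ s.val) ^ t.val := by
  rw [dftRoot, ← exp_neg, ← exp_nat_mul, ← exp_nat_mul, dft, of_apply]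
  ring_nf

theorem dft_eq_vandermonde : dft m = vandermonde fun s : Fin m => dftRoot m ^ s.val :=
  ext dft_apply

theorem isUnit_det_dft [NeZero m] : IsUnit (dft m).det := by
  rw [dft_eq_vandermonde, isUnit_iff_ne_zero]
  exact det_vandermonde_pow_ne_zero_of_isPrimitiveRoot isPrimitiveRoot_dftRoot

theorem dft_apply_add [NeZero m] (s t u : Fin m) :
    dft m s (t + u) = dft m s t * dft m s u := by
  have hroot : (dftRoot m ^ s.val) ^ m = 1 := by
    rw [pow_right_comm, isPrimitiveRoot_dftRoot.pow_eq_one, one_pow]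
  simp only [dft_apply, pow_val_add_of_pow_eq_one hroot]

end DFT

section Sketch

variable {m : ℕ} {ι ι₁ ι₂ : Type*}

theorem mul_map_countSketch_apply {κ R : Type*} [NonUnitalNonAssocSemiring R]
    (A : Matrix κ (Fin m) R) {f : ℝ → R} (hf : f 0 = 0) (h : ι → Fin m) (v : ι → ℝ)
    (s : κ) (i : ι) : (A * (countSketch h v).map f) s i = A s (h i) * f (v i) := by
  simp [mul_apply, countSketch, apply_ite f, hf]

theorem hashPair_apply [NeZero m] (h₁ : ι₁ → Fin m) (h₂ : ι₂ → Fin m) (i : ι₁ × ι₂) :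
    hashPair h₁ h₂ i = h₁ i.1 + h₂ i.2 :=
  Fin.ext (Fin.val_add _ _).symm

theorem dft_mul_tensorSketch [NeZero m] (h₁ : ι₁ → Fin m) (h₂ : ι₂ → Fin m)
    (v₁ : ι₁ → ℝ) (v₂ : ι₂ → ℝ) :
    dft m * (tensorSketch h₁ h₂ v₁ v₂).map ofReal =
      faceSplit (dft m * (countSketch h₂ v₂).map ofReal)
        (dft m * (countSketch h₁ v₁).map ofReal) := by
  ext s i
  simp only [tensorSketch, faceSplit, of_apply, mul_map_countSketch_apply _ ofReal_zero]
  calc dft m s (hashPair h₁ h₂ i) * ((v₁ i.1 * v₂ i.2 : ℝ) : ℂ)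
      = dft m s (h₁ i.1) * dft m s (h₂ i.2) * (v₁ i.1 * v₂ i.2) := by
        rw [hashPair_apply, dft_apply_add, ofReal_mul]
    _ = dft m s (h₂ i.2) * v₂ i.2 * (dft m s (h₁ i.1) * v₁ i.1) := by ring

end Sketch

theorem tensorSketch_eq_invDFT_faceSplit_general {m : ℕ} [NeZero m] {ι₁ ι₂ : Type*}
    (h₁ : ι₁ → Fin m) (h₂ : ι₂ → Fin m) (v₁ : ι₁ → ℝ) (v₂ : ι₂ → ℝ) :
    (tensorSketch h₁ h₂ v₁ v₂).map ofReal =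
      (dft m)⁻¹ *
        faceSplit (dft m * (countSketch h₂ v₂).map ofReal)
          (dft m * (countSketch h₁ v₁).map ofReal) ∧
    ∀ (s : Fin m) (i : ι₁ × ι₂),
      (dft m * (tensorSketch h₁ h₂ v₁ v₂).map ofReal) s i =
        (dft m * (countSketch h₂ v₂).map ofReal) s i.2 *
        (dft m * (countSketch h₁ v₁).map ofReal) s i.1 := by
  constructor
  · rw [← dft_mul_tensorSketch, nonsing_inv_mul_cancel_left _ _ isUnit_det_dft]
  · exact fun s i => congr_fun₂ (dft_mul_tensorSketch h₁ h₂ v₁ v₂) s i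

/-- Lemma 3.1: the TensorSketch matrix generated by two CountSketch
matrices satisfies `S = F⁻¹ [(F S₂) □ (F S₁)]`, equivalently
`(F S)(s, (i₁,i₂)) = (F S₂)(s,i₂) * (F S₁)(s,i₁)`. -/
theorem tensorSketch_eq_invDFT_faceSplit
    {m n₁ n₂ : ℕ} [NeZero m]
    (h₁ : Fin n₁ → Fin m) (h₂ : Fin n₂ → Fin m)
    (v₁ : Fin n₁ → ℝ) (v₂ : Fin n₂ → ℝ)
    (hv₁ : ∀ i, v₁ i = 1 ∨ v₁ i = -1) (hv₂ : ∀ i, v₂ i = 1 ∨ v₂ i = -1)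
    (S : Matrix (Fin m) (Fin n₁ × Fin n₂) ℝ)
    (hS : S = countSketch (hashPair h₁ h₂) (fun i => v₁ i.1 * v₂ i.2)) :
    S.map Complex.ofReal =
      (dft m)⁻¹ *
        faceSplit (dft m * (countSketch h₂ v₂).map Complex.ofReal)
                  (dft m * (countSketch h₁ v₁).map Complex.ofReal) ∧
    ∀ (s : Fin m) (i : Fin n₁ × Fin n₂),
      (dft m * S.map Complex.ofReal) s i =
        (dft m * (countSketch h₂ v₂).map Complex.ofReal) s i.2 *
        (dft m * (countSketch h₁ v₁).map Complex.ofReal) s i.1 := by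
  subst hS
  exact tensorSketch_eq_invDFT_faceSplit_general h₁ h₂ v₁ v₂
end

section
/- (Approximate matrix product for TensorSketch.) Let $S \in \mathbb{R}^{m \times n_1 n_2 \cdots n_q}$ be a random TensorSketch matrix generated by mutually independent random hash maps $h_i : [n_i] \to [m]$, each 3-wise independent, and mutually independent random sign functions $v_i : [n_i] \to \{-1, 1\}$, each 4-wise independent (with the $h_i$'s and $v_i$'s all mutually independent). Let $A$ and $B$ be fixed real matrices with $n_1 n_2 \cdots n_q$ rows. If $m \ge (2 + 3^q)/(\epsilon_0^2 \delta_0)$, then $\Pr\left[\|A^{\top} S^{\top} S B - A^{\top} B\|_F^2 \le \epsilon_0^2\, \|A\|_F^2\, \|B\|_F^2\right] \ge 1 - \delta_0$. -/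
open Matrix MeasureTheory

/-- The TensorSketch matrix generated by hash maps `h k` and sign functions `v k`:
the CountSketch-type matrix with hash map `hashFam h` and sign `i ↦ ∏ k, v k (i k)`. -/
def tsMat {m q : ℕ} [NeZero m] {n : Fin q → ℕ}
    (h : ∀ k, Fin (n k) → Fin m) (v : ∀ k, Fin (n k) → ℝ) :
    Matrix (Fin m) (∀ k, Fin (n k)) ℝ :=
  countSketch (hashFam h) (fun i => ∏ k, v k (i k))

/-- The squared Frobenius norm of a real matrix. -/
def frobSq {α β : Type*} [Fintype α] [Fintype β] (A : Matrix α β ℝ) : ℝ :=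
  ∑ i, ∑ j, A i j ^ 2

/-- A random hash map `h : Ω → ι → Fin m` is `k`-wise independent: each value `h(i)` is
uniformly distributed on `[m]`, and any at most `k` values at distinct indices are mutually
independent (their joint distribution factorizes). -/
def KWiseIndepHash {Ω : Type*} [MeasurableSpace Ω] (μ : Measure Ω) (k : ℕ)
    {ι : Type*} {m : ℕ} (h : Ω → ι → Fin m) : Prop :=
  (∀ (i : ι) (j : Fin m), μ {ω | h ω i = j} = 1 / (m : ENNReal)) ∧
  ∀ t : Finset ι, t.card ≤ k → ∀ j : ι → Fin m,
    μ {ω | ∀ i ∈ t, h ω i = j i} = ∏ i ∈ t, μ {ω | h ω i = j i}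

/-- A random sign function `v : Ω → ι → ℝ` is `k`-wise independent: it takes values in
`{-1, 1}`, each value is uniform on `{-1, 1}`, and any at most `k` values at distinct
indices are mutually independent. -/
def KWiseIndepSign {Ω : Type*} [MeasurableSpace Ω] (μ : Measure Ω) (k : ℕ)
    {ι : Type*} (v : Ω → ι → ℝ) : Prop :=
  (∀ ω i, v ω i = 1 ∨ v ω i = -1) ∧
  (∀ (i : ι) (x : ℝ), x = 1 ∨ x = -1 → μ {ω | v ω i = x} = 1 / 2) ∧
  ∀ t : Finset ι, t.card ≤ k → ∀ x : ι → ℝ,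
    μ {ω | ∀ i ∈ t, v ω i = x i} = ∏ i ∈ t, μ {ω | v ω i = x i}

/-- The random hash maps `H k` and random sign functions `V k` are all mutually independent
(as finitely-valued random variables, their joint distribution factorizes). -/
def IndepHashSigns {Ω : Type*} [MeasurableSpace Ω] (μ : Measure Ω)
    {κ : Type*} [Fintype κ] {n : κ → ℕ} {m : ℕ}
    (H : ∀ k, Ω → Fin (n k) → Fin m) (V : ∀ k, Ω → Fin (n k) → ℝ) : Prop :=
  ∀ (g : ∀ k, Fin (n k) → Fin m) (w : ∀ k, Fin (n k) → ℝ),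
    μ {ω | (∀ k, H k ω = g k) ∧ (∀ k, V k ω = w k)} =
      (∏ k, μ {ω | H k ω = g k}) * ∏ k, μ {ω | V k ω = w k}

/-!
Every entry of `Sᵀ S - 1` is a collision indicator times a product of two signs and vanishes on the
diagonal, so a product of two entries is the indicator of two genuine collisions times a product of
four signs in each tensor factor. The hash maps and the signs are independent. The expected
indicator is at most `1 / m`: two distinct multi-indices differ in some coordinate, and there the
difference of the two hash values is uniform and independent of the other coordinates. The
expected sign product is `0` or `1` in each factor and is dominated by the number of ways to pair
up the four indices; by Cauchy–Schwarz each of the three pairing kernels has `ℓ²` norm at most `1`,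
and such bounds multiply over tensor factors. Hence
`E ‖Aᵀ Sᵀ S B - Aᵀ B‖² ≤ 3 ^ q / m * ‖A‖² * ‖B‖²`, and Markov's inequality concludes.
-/

section FiniteLaws

open ProbabilityTheory

variable {Ω : Type*} [MeasurableSpace Ω] {μ : Measure Ω}

theorem nullMeasurableSet_of_measure_add_measure_compl_le [IsFiniteMeasure μ] {s : Set Ω}
    (h : μ s + μ sᶜ ≤ μ Set.univ) : NullMeasurableSet s μ := by
  have hsub : (toMeasurable μ sᶜ)ᶜ ⊆ s :=
    Set.compl_subset_comm.1 (subset_toMeasurable μ sᶜ)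
  have hmeas : MeasurableSet (toMeasurable μ sᶜ)ᶜ := (measurableSet_toMeasurable μ sᶜ).compl
  have hle : μ s ≤ μ (toMeasurable μ sᶜ)ᶜ := by
    rw [measure_compl (measurableSet_toMeasurable μ sᶜ) (measure_ne_top _ _),
      measure_toMeasurable]
    exact ENNReal.le_sub_of_add_le_right (measure_ne_top _ _) h
  exact hmeas.nullMeasurableSet.congr
    (ae_eq_of_subset_of_measure_ge hsub hle hmeas.nullMeasurableSet (measure_ne_top _ _))

/- Outer measure is only subadditive on the fibres of an arbitrary function, so full total mass
forces each fibre to be null-measurable. -/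
theorem aemeasurable_of_sum_measure_fiber_le [IsFiniteMeasure μ] {E : Type*} [MeasurableSpace E]
    [MeasurableSpace.CountablyGenerated E] {X : Ω → E} {s : Finset E} (hs : ∀ ω, X ω ∈ s)
    (hX : ∑ x ∈ s, μ {ω | X ω = x} ≤ μ Set.univ) : AEMeasurable X μ := by
  classical
  have hfiber : ∀ x ∈ s, NullMeasurableSet {ω | X ω = x} μ := by
    intro x hx
    refine nullMeasurableSet_of_measure_add_measure_compl_le (le_trans ?_ hX)
    rw [← Finset.add_sum_erase _ _ hx]
    refine add_le_add le_rfl ((measure_mono fun ω hω => ?_).trans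
      (measure_biUnion_finset_le _ fun y => {ω | X ω = y}))
    simpa using ⟨hω, hs ω⟩
  refine NullMeasurable.aemeasurable fun t _ => ?_
  have hpreimage : X ⁻¹' t = ⋃ x ∈ {x ∈ s | x ∈ t}, {ω | X ω = x} := by
    ext ω
    simpa using fun _ => hs ω
  rw [hpreimage]
  exact Finset.nullMeasurableSet_biUnion _ fun x hx => hfiber x (Finset.mem_filter.1 hx).1

section Factorization

variable [IsProbabilityMeasure μ] {κ : Type*} [Fintype κ] {E F : κ → Type*}
  [∀ k, MeasurableSpace (E k)] [∀ k, MeasurableSingletonClass (E k)]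
  [∀ k, MeasurableSpace (F k)] [∀ k, MeasurableSingletonClass (F k)]
  {X : ∀ k, Ω → E k} {Y : ∀ k, Ω → F k}

theorem map_prodMk_eq_of_measure_fiber_eq_prod [∀ k, Countable (E k)] [∀ k, Countable (F k)]
    (hX : ∀ k, AEMeasurable (X k) μ) (hY : ∀ k, AEMeasurable (Y k) μ)
    (h : ∀ (x : ∀ k, E k) (y : ∀ k, F k), μ {ω | (∀ k, X k ω = x k) ∧ ∀ k, Y k ω = y k} =
      (∏ k, μ {ω | X k ω = x k}) * ∏ k, μ {ω | Y k ω = y k}) :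
    μ.map (fun ω => (fun k => X k ω, fun k => Y k ω)) =
      (Measure.pi fun k => μ.map (X k)).prod (Measure.pi fun k => μ.map (Y k)) := by
  have (k : κ) := Measure.isProbabilityMeasure_map (hX k)
  have (k : κ) := Measure.isProbabilityMeasure_map (hY k)
  refine Measure.ext_of_singleton fun ⟨x, y⟩ => ?_
  rw [← Set.singleton_prod_singleton, Measure.prod_prod, Measure.pi_singleton,
    Measure.pi_singleton, Set.singleton_prod_singleton, Measure.map_apply_of_aemeasurable
      ((aemeasurable_pi_lambda _ hX).prodMk (aemeasurable_pi_lambda _ hY)) (.singleton _)]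
  simp only [Measure.map_apply_of_aemeasurable (hX _) (.singleton _),
    Measure.map_apply_of_aemeasurable (hY _) (.singleton _)]
  simpa [Set.preimage, funext_iff] using h x y

theorem indep_of_measure_fiber_eq_prod_of_countable [∀ k, Countable (E k)]
    [∀ k, Countable (F k)] (hX : ∀ k, AEMeasurable (X k) μ) (hY : ∀ k, AEMeasurable (Y k) μ)
    (h : ∀ (x : ∀ k, E k) (y : ∀ k, F k), μ {ω | (∀ k, X k ω = x k) ∧ ∀ k, Y k ω = y k} =
      (∏ k, μ {ω | X k ω = x k}) * ∏ k, μ {ω | Y k ω = y k}) :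
    iIndepFun X μ ∧ iIndepFun Y μ ∧ (fun ω k => X k ω) ⟂ᵢ[μ] (fun ω k => Y k ω) := by
  have (k : κ) := Measure.isProbabilityMeasure_map (hX k)
  have (k : κ) := Measure.isProbabilityMeasure_map (hY k)
  have hX' : AEMeasurable (fun ω k => X k ω) μ := aemeasurable_pi_lambda _ hX
  have hY' : AEMeasurable (fun ω k => Y k ω) μ := aemeasurable_pi_lambda _ hY
  have hlaw := map_prodMk_eq_of_measure_fiber_eq_prod hX hY h
  have hlawX : μ.map (fun ω k => X k ω) = Measure.pi fun k => μ.map (X k) := by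
    rw [← Measure.fst_map_prodMk₀ hY', hlaw, Measure.fst_prod]
  have hlawY : μ.map (fun ω k => Y k ω) = Measure.pi fun k => μ.map (Y k) := by
    rw [← Measure.snd_map_prodMk₀ hX', hlaw, Measure.snd_prod]
  refine ⟨(iIndepFun_iff_map_fun_eq_pi_map hX).2 hlawX,
    (iIndepFun_iff_map_fun_eq_pi_map hY).2 hlawY,
    (indepFun_iff_map_prod_eq_prod_map_map hX' hY').2 ?_⟩
  rw [hlaw, hlawX, hlawY]

theorem indep_of_measure_fiber_eq_prod (hX : ∀ k, AEMeasurable (X k) μ)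
    (hY : ∀ k, AEMeasurable (Y k) μ) (hXr : ∀ k, (Set.range (X k)).Countable)
    (hYr : ∀ k, (Set.range (Y k)).Countable)
    (h : ∀ (x : ∀ k, E k) (y : ∀ k, F k), μ {ω | (∀ k, X k ω = x k) ∧ ∀ k, Y k ω = y k} =
      (∏ k, μ {ω | X k ω = x k}) * ∏ k, μ {ω | Y k ω = y k}) :
    iIndepFun X μ ∧ iIndepFun Y μ ∧ (fun ω k => X k ω) ⟂ᵢ[μ] (fun ω k => Y k ω) := by
  have (k : κ) := (hXr k).to_subtype
  have (k : κ) := (hYr k).to_subtype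
  obtain ⟨hiX, hiY, hXY⟩ := indep_of_measure_fiber_eq_prod_of_countable
    (X := fun k => Set.rangeFactorization (X k)) (Y := fun k => Set.rangeFactorization (Y k))
    (fun k => (hX k).subtype_mk) (fun k => (hY k).subtype_mk) fun x y => by
      simpa [Subtype.ext_iff] using h (fun k => x k) fun k => y k
  have hcoeX : Measurable fun (x : ∀ k, Set.range (X k)) k => (x k : E k) := by fun_prop
  have hcoeY : Measurable fun (y : ∀ k, Set.range (Y k)) k => (y k : F k) := by fun_prop
  exact ⟨hiX.comp (fun _ => Subtype.val) fun _ => measurable_subtype_coe,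
    hiY.comp (fun _ => Subtype.val) fun _ => measurable_subtype_coe,
    hXY.comp hcoeX hcoeY⟩

theorem iIndepFun_of_measure_fiber_eq_prod (hX : ∀ k, AEMeasurable (X k) μ)
    (hXr : ∀ k, (Set.range (X k)).Countable)
    (h : ∀ x : ∀ k, E k, μ {ω | ∀ k, X k ω = x k} = ∏ k, μ {ω | X k ω = x k}) :
    iIndepFun X μ :=
  (indep_of_measure_fiber_eq_prod (Y := fun _ _ => ()) hX (fun _ => aemeasurable_const) hXr
    (fun _ => Set.to_countable _) fun x _ => by simpa using h x).1

theorem iIndepFun_restrict_of_measure_fiber_eq_prod {ι : Type*} {E : ι → Type*}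
    [∀ i, Nonempty (E i)] [∀ i, MeasurableSpace (E i)] [∀ i, MeasurableSingletonClass (E i)]
    {X : ∀ i, Ω → E i} {t : Finset ι} (hX : ∀ i ∈ t, AEMeasurable (X i) μ)
    (hXr : ∀ i ∈ t, (Set.range (X i)).Countable)
    (h : ∀ x : ∀ i, E i, μ {ω | ∀ i ∈ t, X i ω = x i} = ∏ i ∈ t, μ {ω | X i ω = x i}) :
    iIndepFun (fun i : t => X i) μ := by
  classical
  refine iIndepFun_of_measure_fiber_eq_prod (fun i => hX i i.2) (fun i => hXr i i.2) fun x => ?_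
  have hprod := h fun i => if hi : i ∈ t then x ⟨i, hi⟩ else Classical.arbitrary (E i)
  rw [← Finset.prod_coe_sort] at hprod
  simpa +contextual using hprod

end Factorization

theorem measure_eq_eq_of_indepFun [IsProbabilityMeasure μ] {E : Type*} [Countable E]
    [MeasurableSpace E] [MeasurableSingletonClass E] {X Y : Ω → E} (hX : AEMeasurable X μ)
    (hY : AEMeasurable Y μ) (hXY : X ⟂ᵢ[μ] Y) {c : ENNReal} (hc : ∀ x, μ {ω | X ω = x} = c) :
    μ {ω | X ω = Y ω} = c := by
  have := Measure.isProbabilityMeasure_map hY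
  have hdiag : MeasurableSet {p : E × E | p.1 = p.2} := .of_discrete
  calc μ {ω | X ω = Y ω}
      = μ.map (fun ω => (X ω, Y ω)) {p | p.1 = p.2} :=
        (Measure.map_apply_of_aemeasurable (hX.prodMk hY) hdiag).symm
    _ = ∫⁻ y, μ.map X {y} ∂μ.map Y := by
        rw [hXY.map_prod_eq_prod_map_map hX hY, Measure.prod_apply_symm hdiag]
        rfl
    _ = ∫⁻ _, c ∂μ.map Y := by
        refine lintegral_congr fun y => ?_
        rw [Measure.map_apply_of_aemeasurable hX (.singleton y), ← hc y]
        rfl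
    _ = c := by simp

theorem measure_sum_eq_of_iIndepFun [IsProbabilityMeasure μ] {G κ : Type*} [AddCommGroup G]
    [Countable G] [MeasurableSpace G] [MeasurableSingletonClass G] [Fintype κ] {D : κ → Ω → G}
    (hD : ∀ k, AEMeasurable (D k) μ) (hind : iIndepFun D μ) {c : ENNReal} (t : κ)
    (hc : ∀ g, μ {ω | D t ω = g} = c) (g : G) : μ {ω | ∑ k, D k ω = g} = c := by
  classical
  have hrest := (hind.indepFun_finsetSum_of_notMem₀ hD
    (Finset.notMem_erase t Finset.univ)).symm
  have hrest_meas : AEMeasurable (∑ k ∈ Finset.univ.erase t, D k) μ :=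
    Finset.aemeasurable_sum _ fun k _ => hD k
  have hsub : Measurable fun r : G => g - r := .of_discrete
  rw [← measure_eq_eq_of_indepFun (hD t) (hsub.comp_aemeasurable hrest_meas)
    (hrest.comp measurable_id hsub) hc]
  have hsum (ω : Ω) : ∑ k, D k ω = D t ω + (∑ k ∈ Finset.univ.erase t, D k) ω := by
    rw [Finset.sum_apply, Finset.add_sum_erase _ (D · ω) (Finset.mem_univ t)]
  simp only [hsum, Function.comp_apply, eq_sub_iff_add_eq]

theorem integral_ite_one_zero {p : Ω → Prop} [DecidablePred p]
    (hp : NullMeasurableSet {ω | p ω} μ) :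
    ∫ ω, (if p ω then 1 else 0 : ℝ) ∂μ = μ.real {ω | p ω} := by
  have hind : (fun ω => (if p ω then 1 else 0 : ℝ)) = {ω | p ω}.indicator 1 := by
    ext ω
    simp [Set.indicator_apply]
  rw [hind, integral_indicator₀ hp]
  simp

theorem one_sub_le_measureReal_le_of_integral_le [IsProbabilityMeasure μ] {Z : Ω → ℝ}
    (hZ : 0 ≤ Z) (hint : Integrable Z μ) {δ T : ℝ} (hδ : 0 ≤ δ) (hT : 0 ≤ T)
    (h : ∫ ω, Z ω ∂μ ≤ δ * T) : 1 - δ ≤ μ.real {ω | Z ω ≤ T} := by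
  have hcompl : μ.real {ω | T < Z ω} ≤ δ := by
    rcases hT.eq_or_lt with rfl | hT
    · have hZ0 : Z =ᵐ[μ] 0 := (integral_eq_zero_iff_of_nonneg hZ hint).1
        (le_antisymm (by simpa using h) (integral_nonneg hZ))
      have hnull : μ {ω | 0 < Z ω} = 0 :=
        measure_mono_null (fun ω hω => (ne_of_gt hω : Z ω ≠ 0)) hZ0
      simpa [Measure.real, hnull] using hδ
    · have hmarkov := mul_meas_ge_le_integral_of_nonneg (.of_forall hZ) hint T
      have hmono : μ.real {ω | T < Z ω} ≤ μ.real {ω | T ≤ Z ω} :=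
        measureReal_mono fun ω (hω : T < Z ω) => hω.le
      refine hmono.trans (le_of_mul_le_mul_left ?_ hT)
      linarith
  have hunion := measureReal_union_le (μ := μ) {ω | Z ω ≤ T} {ω | T < Z ω}
  have huniv : {ω | Z ω ≤ T} ∪ {ω | T < Z ω} = Set.univ := by
    ext ω; simp [le_or_gt]
  rw [huniv, probReal_univ] at hunion
  linarith

end FiniteLaws

section Signs

open ProbabilityTheory

variable {ι σ : Type*}

section Parity

variable [Fintype σ] [DecidableEq ι]

/-- The values that `x` takes an odd number of times; these index the signs left in `∏ s, u (x s)`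
once the squares are cancelled. -/
def oddValues (x : σ → ι) : Finset ι :=
  {i ∈ Finset.univ.image x | Odd (Finset.card {s | x s = i})}

theorem card_oddValues_le (x : σ → ι) : (oddValues x).card ≤ Fintype.card σ :=
  (Finset.card_filter_le _ _).trans Finset.card_image_le

theorem prod_comp_eq_prod_oddValues {R : Type*} [CommMonoid R] {u : ι → R}
    (hu : ∀ i, u i ^ 2 = 1) (x : σ → ι) : ∏ s, u (x s) = ∏ i ∈ oddValues x, u i := by
  rw [Finset.prod_comp, oddValues, Finset.prod_filter]
  refine Finset.prod_congr rfl fun i _ => ?_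
  split_ifs with hodd
  · obtain ⟨c, hc⟩ := hodd
    rw [hc, pow_succ, pow_mul, hu, one_pow, one_mul]
  · obtain ⟨c, hc⟩ := Nat.not_odd_iff_even.1 hodd
    rw [hc, ← two_mul, pow_mul, hu, one_pow]

/-- The number of the three perfect matchings of `{0, 1, 2, 3}` whose edges join indices at which
`x` takes equal values; it dominates the fourth moments of a `4`-wise independent sign function. -/
def pairingCount (x : Fin 4 → ι) : ℝ :=
  (if x 0 = x 1 ∧ x 2 = x 3 then 1 else 0) + (if x 0 = x 2 ∧ x 1 = x 3 then 1 else 0) +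
    if x 0 = x 3 ∧ x 1 = x 2 then 1 else 0

theorem pairingCount_nonneg (x : Fin 4 → ι) : 0 ≤ pairingCount x := by
  unfold pairingCount
  positivity

theorem one_le_pairingCount_of_oddValues_eq_empty {x : Fin 4 → ι} (hx : oddValues x = ∅) :
    1 ≤ pairingCount x := by
  have heven (s : Fin 4) : Even (Finset.card {r | x r = x s}) := by
    simpa using Finset.filter_eq_empty_iff.1 hx (Finset.mem_image_of_mem x (Finset.mem_univ s))
  have hpair : (x 0 = x 1 ∧ x 2 = x 3) ∨ (x 0 = x 2 ∧ x 1 = x 3) ∨ (x 0 = x 3 ∧ x 1 = x 2) := by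
    simp only [Finset.card_filter, Fin.sum_univ_four] at heven
    have h0 := heven 0
    have h1 := heven 1
    have h2 := heven 2
    grind
  unfold pairingCount
  rcases hpair with h | h | h <;> simp only [if_pos h] <;> split_ifs <;> norm_num

end Parity

namespace KWiseIndepSign

variable {Ω : Type*} [MeasurableSpace Ω] {μ : Measure Ω} {k : ℕ} {v : Ω → ι → ℝ}

theorem abs_eq_one (hv : KWiseIndepSign μ k v) (ω : Ω) (i : ι) : |v ω i| = 1 := by
  rcases hv.1 ω i with h | h <;> simp [h]

theorem sq_eq_one (hv : KWiseIndepSign μ k v) (ω : Ω) (i : ι) : v ω i ^ 2 = 1 := by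
  rcases hv.1 ω i with h | h <;> simp [h]

theorem finite_range (hv : KWiseIndepSign μ k v) (i : ι) :
    (Set.range fun ω => v ω i).Finite :=
  (Set.toFinite {1, -1}).subset (Set.range_subset_iff.2 fun ω => hv.1 ω i)

variable [IsProbabilityMeasure μ]

theorem aemeasurable (hv : KWiseIndepSign μ k v) (i : ι) : AEMeasurable (fun ω => v ω i) μ := by
  refine aemeasurable_of_sum_measure_fiber_le (s := {1, -1}) (by simpa using (hv.1 · i)) ?_
  rw [Finset.sum_pair (by norm_num), hv.2.1 i 1 (.inl rfl), hv.2.1 i (-1) (.inr rfl),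
    ENNReal.add_halves, measure_univ]

theorem integral_eq_zero (hv : KWiseIndepSign μ k v) (i : ι) : ∫ ω, v ω i ∂μ = 0 := by
  have hone : NullMeasurableSet {ω | v ω i = 1} μ :=
    (hv.aemeasurable i).nullMeasurableSet_preimage (.singleton 1)
  have hint : Integrable (fun ω => (if v ω i = 1 then 1 else 0 : ℝ)) μ := by
    refine .of_integral_ne_zero ?_
    simp [integral_ite_one_zero hone, Measure.real, hv.2.1 i 1 (.inl rfl)]
  calc ∫ ω, v ω i ∂μ = ∫ ω, (2 * (if v ω i = 1 then 1 else 0) - 1) ∂μ := by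
        refine integral_congr_ae (.of_forall fun ω => ?_)
        rcases hv.1 ω i with h | h <;> norm_num [h]
    _ = 2 * μ.real {ω | v ω i = 1} - 1 := by
        rw [integral_sub (hint.const_mul 2) (integrable_const 1), integral_const_mul,
          integral_ite_one_zero hone]
        simp
    _ = 0 := by simp [Measure.real, hv.2.1 i 1 (.inl rfl)]

theorem iIndepFun_restrict (hv : KWiseIndepSign μ k v) {t : Finset ι} (ht : t.card ≤ k) :
    iIndepFun (fun (i : t) ω => v ω i) μ :=
  iIndepFun_restrict_of_measure_fiber_eq_prod (X := fun i ω => v ω i)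
    (fun i _ => hv.aemeasurable i) (fun i _ => (hv.finite_range i).countable) (hv.2.2 t ht)

theorem integral_prod_eq_zero (hv : KWiseIndepSign μ k v) {t : Finset ι} (ht : t.card ≤ k)
    (hne : t.Nonempty) : ∫ ω, ∏ i ∈ t, v ω i ∂μ = 0 := by
  simp only [← Finset.prod_coe_sort t]
  rw [(hv.iIndepFun_restrict ht).integral_fun_prod_eq_prod_integral
    fun i => (hv.aemeasurable i).aestronglyMeasurable]
  obtain ⟨i, hi⟩ := hne
  exact Finset.prod_eq_zero (Finset.mem_univ ⟨i, hi⟩) (hv.integral_eq_zero i)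

theorem abs_integral_prod_le_pairingCount [DecidableEq ι] (hv : KWiseIndepSign μ 4 v)
    (x : Fin 4 → ι) : |∫ ω, ∏ s, v ω (x s) ∂μ| ≤ pairingCount x := by
  simp only [prod_comp_eq_prod_oddValues (hv.sq_eq_one _)]
  rcases (oddValues x).eq_empty_or_nonempty with hx | hx
  · simpa [hx] using one_le_pairingCount_of_oddValues_eq_empty hx
  · simpa [hv.integral_prod_eq_zero (card_oddValues_le x) hx] using pairingCount_nonneg x

end KWiseIndepSign

end Signs

section L2Bounded

/-- A kernel is `ℓ²`-bounded by `C` if the multilinear form it defines is at most `C` times the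
product of the `ℓ²` norms of its arguments; testing on nonnegative arguments only is enough for
nonnegative kernels. -/
def IsL2Bounded {σ α : Type*} [Fintype σ] [DecidableEq σ] [Fintype α] (K : (σ → α) → ℝ)
    (C : ℝ) : Prop :=
  ∀ f : σ → α → ℝ, 0 ≤ f → ∑ x, K x * ∏ s, f s (x s) ≤ C * ∏ s, √(∑ a, f s a ^ 2)

namespace IsL2Bounded

variable {σ τ α β : Type*} [Fintype σ] [DecidableEq σ] [Fintype τ] [DecidableEq τ] [Fintype α]
  [Fintype β] {K L : (σ → α) → ℝ} {C D : ℝ}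

theorem add (hK : IsL2Bounded K C) (hL : IsL2Bounded L D) :
    IsL2Bounded (fun x => K x + L x) (C + D) := fun f hf => by
  simp only [add_mul, Finset.sum_add_distrib]
  exact add_le_add (hK f hf) (hL f hf)

theorem const_mul (hK : IsL2Bounded K C) {c : ℝ} (hc : 0 ≤ c) :
    IsL2Bounded (fun x => c * K x) (c * C) := fun f hf => by
  simp only [mul_assoc, ← Finset.mul_sum]
  exact mul_le_mul_of_nonneg_left (hK f hf) hc

theorem reindex (hK : IsL2Bounded K C) (e : σ ≃ τ) (e' : α ≃ β) :
    IsL2Bounded (fun x : τ → β => K fun s => e'.symm (x (e s))) C := fun f hf => by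
  have hnorm (t : τ) : ∑ a, f t (e' a) ^ 2 = ∑ b, f t b ^ 2 := e'.sum_comp fun b => f t b ^ 2
  calc ∑ x : τ → β, (K fun s => e'.symm (x (e s))) * ∏ t, f t (x t)
      = ∑ y : σ → α, K y * ∏ s, f (e s) (e' (y s)) := by
        refine Fintype.sum_equiv (e.arrowCongr e').symm _ _ fun x => ?_
        have hsymm : (e.arrowCongr e').symm x = fun s => e'.symm (x (e s)) := rfl
        rw [← e.prod_comp, hsymm]
        simp
    _ ≤ C * ∏ s, √(∑ a, f (e s) (e' a) ^ 2) := hK _ fun s a => hf (e s) (e' a)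
    _ = C * ∏ t, √(∑ b, f t b ^ 2) := by
        rw [← e.prod_comp]
        simp only [hnorm]

theorem prod {L : (σ → β) → ℝ} (hK : IsL2Bounded K C) (hL : IsL2Bounded L D) (hK0 : 0 ≤ K)
    (hD : 0 ≤ D) :
    IsL2Bounded (fun x : σ → α × β => (K fun s => (x s).1) * L fun s => (x s).2) (C * D) :=
    fun f hf => by
  let g : σ → α → ℝ := fun s a => √(∑ b, f s (a, b) ^ 2)
  have hg_sq (s : σ) (a : α) : g s a ^ 2 = ∑ b, f s (a, b) ^ 2 :=
    Real.sq_sqrt (Finset.sum_nonneg fun b _ => sq_nonneg _)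
  calc ∑ x : σ → α × β, ((K fun s => (x s).1) * L fun s => (x s).2) * ∏ s, f s (x s)
      = ∑ y : σ → α, K y * ∑ z : σ → β, L z * ∏ s, f s (y s, z s) := by
        simp only [Finset.mul_sum, ← Fintype.sum_prod_type']
        refine Fintype.sum_equiv (Equiv.arrowProdEquivProdArrow σ _ _) _ _ fun x => ?_
        simp [Equiv.arrowProdEquivProdArrow, mul_assoc]
    _ ≤ ∑ y : σ → α, K y * (D * ∏ s, g s (y s)) :=
        Finset.sum_le_sum fun y _ =>
          mul_le_mul_of_nonneg_left (hL _ fun s b => hf s (y s, b)) (hK0 y)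
    _ = D * ∑ y : σ → α, K y * ∏ s, g s (y s) := by
        simp only [Finset.mul_sum, mul_left_comm]
    _ ≤ D * (C * ∏ s, √(∑ a, g s a ^ 2)) :=
        mul_le_mul_of_nonneg_left (hK g fun s a => Real.sqrt_nonneg _) hD
    _ = C * D * ∏ s, √(∑ p, f s p ^ 2) := by
        simp only [hg_sq, Fintype.sum_prod_type]
        ring

theorem pi {q : ℕ} {α : Fin q → Type*} [∀ t, Fintype (α t)] {K : ∀ t, (σ → α t) → ℝ}
    {C : Fin q → ℝ} (hK : ∀ t, IsL2Bounded (K t) (C t)) (hK0 : ∀ t, 0 ≤ K t)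
    (hC : ∀ t, 0 ≤ C t) :
    IsL2Bounded (fun x : σ → ∀ t, α t => ∏ t, K t fun s => x s t) (∏ t, C t) := by
  induction q with
  | zero =>
    intro f hf
    simp [Real.sqrt_sq (hf _ _)]
  | succ q ih =>
    have htail := ih (fun t => hK t.succ) (fun t => hK0 t.succ) fun t => hC t.succ
    have hcons := ((hK 0).prod htail (hK0 0) (Finset.prod_nonneg fun t _ => hC t.succ)).reindex
      (Equiv.refl σ) (Fin.consEquiv α)
    simp only [Fin.prod_univ_succ]
    exact hcons

end IsL2Bounded

variable {α : Type*} [Fintype α] [DecidableEq α]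

theorem isL2Bounded_pairing :
    IsL2Bounded (fun x : Fin 4 → α => if x 0 = x 1 ∧ x 2 = x 3 then 1 else 0) 1 := fun f hf => by
  have hCS (g h : α → ℝ) := Real.sum_mul_le_sqrt_mul_sqrt Finset.univ g h
  calc ∑ x : Fin 4 → α, (if x 0 = x 1 ∧ x 2 = x 3 then 1 else 0) * ∏ s, f s (x s)
      = ∑ x : Fin 4 → α with x 0 = x 1 ∧ x 2 = x 3, ∏ s, f s (x s) := by
        simp only [ite_mul, one_mul, zero_mul, Finset.sum_filter]
    _ = ∑ p : α × α, (f 0 p.1 * f 1 p.1) * (f 2 p.2 * f 3 p.2) := by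
        refine Finset.sum_nbij' (fun x => (x 0, x 2)) (fun p => ![p.1, p.1, p.2, p.2])
          (by simp) (by simp) ?_ (by simp) ?_
        · intro x hx
          obtain ⟨h01, h23⟩ := (Finset.mem_filter.1 hx).2
          ext s
          fin_cases s <;> simp [h01, h23]
        · intro x hx
          obtain ⟨h01, h23⟩ := (Finset.mem_filter.1 hx).2
          simp only [Fin.prod_univ_four, h01, h23]
          ring
    _ = (∑ a, f 0 a * f 1 a) * ∑ a, f 2 a * f 3 a := by
        rw [Finset.sum_mul_sum, Fintype.sum_prod_type]
    _ ≤ (√(∑ a, f 0 a ^ 2) * √(∑ a, f 1 a ^ 2)) * (√(∑ a, f 2 a ^ 2) * √(∑ a, f 3 a ^ 2)) :=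
        mul_le_mul (hCS _ _) (hCS _ _)
          (Finset.sum_nonneg fun a _ => mul_nonneg (hf 2 a) (hf 3 a)) (by positivity)
    _ = 1 * ∏ s, √(∑ a, f s a ^ 2) := by
        rw [Fin.prod_univ_four]
        ring

theorem isL2Bounded_pairingCount : IsL2Bounded (pairingCount (ι := α)) 3 := by
  have h02 := isL2Bounded_pairing.reindex (Equiv.swap (1 : Fin 4) 2) (Equiv.refl α)
  have h03 := isL2Bounded_pairing.reindex (Equiv.swap (1 : Fin 4) 3) (Equiv.refl α)
  convert (isL2Bounded_pairing.add h02).add h03 using 1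
  · ext x
    simp only [pairingCount, Equiv.refl_symm, Equiv.refl_apply, Equiv.swap_apply_def]
    simp [eq_comm, and_comm]
  · norm_num

end L2Bounded

section Hashing

open ProbabilityTheory

theorem fin_val_sum {m : ℕ} [NeZero m] {κ : Type*} (s : Finset κ) (f : κ → Fin m) :
    ((∑ k ∈ s, f k : Fin m) : ℕ) = (∑ k ∈ s, (f k : ℕ)) % m := by
  classical
  induction s using Finset.induction_on with
  | empty => simp
  | insert k s hk ih => simp [Finset.sum_insert hk, Fin.val_add, ih]

theorem hashFam_eq_sum {m q : ℕ} [NeZero m] {n : Fin q → ℕ} (h : ∀ k, Fin (n k) → Fin m)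
    (i : ∀ k, Fin (n k)) : hashFam h i = ∑ k, h k (i k) :=
  Fin.ext (fin_val_sum _ _).symm

variable {Ω : Type*} [MeasurableSpace Ω] {μ : Measure Ω} {m : ℕ}

namespace KWiseIndepHash

variable {ι : Type*} {k : ℕ} {h : Ω → ι → Fin m}

theorem mono {l : ℕ} (hlk : l ≤ k) (hh : KWiseIndepHash μ k h) : KWiseIndepHash μ l h :=
  ⟨hh.1, fun t ht => hh.2 t (ht.trans hlk)⟩

variable [NeZero m] [IsProbabilityMeasure μ]

theorem aemeasurable (hh : KWiseIndepHash μ k h) (i : ι) : AEMeasurable (fun ω => h ω i) μ := by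
  refine aemeasurable_of_sum_measure_fiber_le (s := Finset.univ) (by simp) ?_
  simp [hh.1, ENNReal.mul_inv_cancel (NeZero.ne _) (ENNReal.natCast_ne_top m)]

theorem iIndepFun_restrict (hh : KWiseIndepHash μ k h) {t : Finset ι} (ht : t.card ≤ k) :
    iIndepFun (fun (i : t) ω => h ω i) μ :=
  iIndepFun_restrict_of_measure_fiber_eq_prod (X := fun i ω => h ω i)
    (fun i _ => hh.aemeasurable i) (fun _ _ => Set.to_countable _) (hh.2 t ht)

theorem measure_sub_eq (hh : KWiseIndepHash μ 2 h) {i j : ι} (hij : i ≠ j) (d : Fin m) :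
    μ {ω | h ω i - h ω j = d} = 1 / m := by
  classical
  have hind : (fun ω => h ω i) ⟂ᵢ[μ] (fun ω => h ω j) :=
    (hh.iIndepFun_restrict (t := {i, j}) Finset.card_le_two).indepFun
      (i := ⟨i, by simp⟩) (j := ⟨j, by simp⟩) (by simpa using hij)
  have hadd : Measurable fun y : Fin m => d + y := .of_discrete
  rw [← measure_eq_eq_of_indepFun (hh.aemeasurable i) (hadd.comp_aemeasurable (hh.aemeasurable j))
    (hind.comp measurable_id hadd) (hh.1 i)]
  simp [sub_eq_iff_eq_add]

end KWiseIndepHash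

variable [NeZero m] [IsProbabilityMeasure μ] {q : ℕ} {n : Fin q → ℕ}
  {H : ∀ k, Ω → Fin (n k) → Fin m}

theorem measure_hashFam_eq_hashFam (hH : ∀ k, KWiseIndepHash μ 2 (H k)) (hind : iIndepFun H μ)
    {i j : ∀ k, Fin (n k)} (hij : i ≠ j) :
    μ {ω | hashFam (fun k => H k ω) i = hashFam (fun k => H k ω) j} = 1 / m := by
  obtain ⟨t, ht⟩ := Function.ne_iff.1 hij
  have hdiff (k : Fin q) : Measurable fun g : Fin (n k) → Fin m => g (i k) - g (j k) :=
    .of_discrete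
  have hH_meas (k : Fin q) : AEMeasurable (H k) μ :=
    aemeasurable_pi_lambda _ (hH k).aemeasurable
  simp only [hashFam_eq_sum, ← sub_eq_zero (b := ∑ _, _), ← Finset.sum_sub_distrib]
  exact measure_sum_eq_of_iIndepFun (fun k => (hdiff k).comp_aemeasurable (hH_meas k))
    (hind.comp _ hdiff) t (fun d => (hH t).measure_sub_eq ht d) 0

end Hashing

section QuadraticForms

variable {ι : Type*} [Fintype ι]

theorem IsL2Bounded.sum_mul_prod_le_of_abs_le {σ : Type*} [Fintype σ] [DecidableEq σ]
    {K E : (σ → ι) → ℝ} {C : ℝ} (hK : IsL2Bounded K C) (hE : ∀ x, |E x| ≤ K x)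
    (f : σ → ι → ℝ) : ∑ x, E x * ∏ s, f s (x s) ≤ C * ∏ s, √(∑ i, f s i ^ 2) :=
  calc ∑ x, E x * ∏ s, f s (x s) ≤ ∑ x, K x * ∏ s, |f s (x s)| :=
        Finset.sum_le_sum fun x _ => by
          refine (le_abs_self _).trans ?_
          rw [abs_mul, Finset.abs_prod]
          exact mul_le_mul_of_nonneg_right (hE x) (by positivity)
    _ ≤ C * ∏ s, √(∑ i, |f s i| ^ 2) := hK (fun s i => |f s i|) fun s i => abs_nonneg _
    _ = C * ∏ s, √(∑ i, f s i ^ 2) := by simp only [sq_abs]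

theorem dotProduct_mulVec_sq (M : Matrix ι ι ℝ) (u w : ι → ℝ) :
    (u ⬝ᵥ M *ᵥ w) ^ 2 =
      ∑ x : Fin 4 → ι, M (x 0) (x 1) * M (x 2) (x 3) * ∏ s, ![u, w, u, w] s (x s) := by
  have hform : u ⬝ᵥ M *ᵥ w = ∑ p : ι × ι, u p.1 * (M p.1 p.2 * w p.2) := by
    simp only [dotProduct, mulVec, Finset.mul_sum, Fintype.sum_prod_type]
  rw [hform, sq, Finset.sum_mul_sum, ← Fintype.sum_prod_type']
  refine Finset.sum_nbij' (fun p => ![p.1.1, p.1.2, p.2.1, p.2.2])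
    (fun x => ((x 0, x 1), (x 2, x 3))) (by simp) (by simp) (by simp) ?_ ?_
  · intro x _
    ext s
    fin_cases s <;> rfl
  · intro p _
    simp [Fin.prod_univ_four]
    ring

theorem frobSq_nonneg {α β : Type*} [Fintype α] [Fintype β] (A : Matrix α β ℝ) :
    0 ≤ frobSq A := by
  unfold frobSq
  positivity

theorem frobSq_transpose_mul_mul {α β : Type*} [Fintype α] [Fintype β] (A : Matrix ι α ℝ)
    (M : Matrix ι ι ℝ) (B : Matrix ι β ℝ) :
    frobSq (Aᵀ * M * B) = ∑ a, ∑ b, (Aᵀ a ⬝ᵥ M *ᵥ Bᵀ b) ^ 2 := by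
  rw [Matrix.mul_assoc]
  rfl

variable {Ω : Type*} [MeasurableSpace Ω] {μ : Measure Ω} {R : Ω → Matrix ι ι ℝ}

theorem integrable_dotProduct_mulVec_sq
    (hint : ∀ x : Fin 4 → ι, Integrable (fun ω => R ω (x 0) (x 1) * R ω (x 2) (x 3)) μ)
    (u w : ι → ℝ) : Integrable (fun ω => (u ⬝ᵥ R ω *ᵥ w) ^ 2) μ := by
  simp only [dotProduct_mulVec_sq]
  exact integrable_finsetSum _ fun x _ => (hint x).mul_const _

theorem integral_dotProduct_mulVec_sq_le
    (hint : ∀ x : Fin 4 → ι, Integrable (fun ω => R ω (x 0) (x 1) * R ω (x 2) (x 3)) μ)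
    {K : (Fin 4 → ι) → ℝ} {C : ℝ} (hK : IsL2Bounded K C)
    (hR : ∀ x, |∫ ω, R ω (x 0) (x 1) * R ω (x 2) (x 3) ∂μ| ≤ K x) (u w : ι → ℝ) :
    ∫ ω, (u ⬝ᵥ R ω *ᵥ w) ^ 2 ∂μ ≤ C * ((∑ i, u i ^ 2) * ∑ i, w i ^ 2) := by
  calc ∫ ω, (u ⬝ᵥ R ω *ᵥ w) ^ 2 ∂μ
      = ∑ x : Fin 4 → ι, (∫ ω, R ω (x 0) (x 1) * R ω (x 2) (x 3) ∂μ) *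
          ∏ s, ![u, w, u, w] s (x s) := by
        simp only [dotProduct_mulVec_sq]
        rw [integral_finsetSum _ fun x _ => (hint x).mul_const _]
        simp only [integral_mul_const]
    _ ≤ C * ∏ s, √(∑ i, ![u, w, u, w] s i ^ 2) := hK.sum_mul_prod_le_of_abs_le hR _
    _ = C * (√(∑ i, u i ^ 2) ^ 2 * √(∑ i, w i ^ 2) ^ 2) := by
        simp only [Fin.prod_univ_four, cons_val]
        ring
    _ = C * ((∑ i, u i ^ 2) * ∑ i, w i ^ 2) := by
        rw [Real.sq_sqrt (by positivity), Real.sq_sqrt (by positivity)]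

variable {α β : Type*} [Fintype α] [Fintype β] (A : Matrix ι α ℝ) (B : Matrix ι β ℝ)

theorem integrable_frobSq_transpose_mul_mul
    (hint : ∀ x : Fin 4 → ι, Integrable (fun ω => R ω (x 0) (x 1) * R ω (x 2) (x 3)) μ) :
    Integrable (fun ω => frobSq (Aᵀ * R ω * B)) μ := by
  simp only [frobSq_transpose_mul_mul]
  exact integrable_finsetSum _ fun a _ => integrable_finsetSum _ fun b _ =>
    integrable_dotProduct_mulVec_sq hint _ _

theorem integral_frobSq_transpose_mul_mul_le
    (hint : ∀ x : Fin 4 → ι, Integrable (fun ω => R ω (x 0) (x 1) * R ω (x 2) (x 3)) μ)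
    {K : (Fin 4 → ι) → ℝ} {C : ℝ} (hK : IsL2Bounded K C)
    (hR : ∀ x, |∫ ω, R ω (x 0) (x 1) * R ω (x 2) (x 3) ∂μ| ≤ K x) :
    ∫ ω, frobSq (Aᵀ * R ω * B) ∂μ ≤ C * (frobSq A * frobSq B) := by
  have hint' (a : α) (b : β) := integrable_dotProduct_mulVec_sq hint (Aᵀ a) (Bᵀ b)
  calc ∫ ω, frobSq (Aᵀ * R ω * B) ∂μ
      = ∑ a, ∑ b, ∫ ω, (Aᵀ a ⬝ᵥ R ω *ᵥ Bᵀ b) ^ 2 ∂μ := by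
        simp only [frobSq_transpose_mul_mul]
        rw [integral_finsetSum _ fun a _ => integrable_finsetSum _ fun b _ => hint' a b]
        simp only [integral_finsetSum _ fun b _ => hint' _ b]
    _ ≤ ∑ a, ∑ b, C * ((∑ i, Aᵀ a i ^ 2) * ∑ i, Bᵀ b i ^ 2) :=
        Finset.sum_le_sum fun a _ => Finset.sum_le_sum fun b _ =>
          integral_dotProduct_mulVec_sq_le hint hK hR _ _
    _ = C * (frobSq A * frobSq B) := by
        simp only [← Finset.mul_sum, ← Finset.sum_mul, transpose_apply]
        rw [frobSq, frobSq, Finset.sum_comm, Finset.sum_comm (f := fun i b => B i b ^ 2)]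

end QuadraticForms

section TensorSketch

open ProbabilityTheory

/-- The indicator that `h` merges both `x 0` with `x 1` and `x 2` with `x 3`, the merged indices
being distinct; it is what the hash maps contribute to a product of two entries of `gramError`. -/
def collisionIndicator {ι κ : Type*} [DecidableEq ι] [DecidableEq κ] (h : ι → κ)
    (x : Fin 4 → ι) : ℝ :=
  if (x 0 ≠ x 1 ∧ h (x 0) = h (x 1)) ∧ x 2 ≠ x 3 ∧ h (x 2) = h (x 3) then 1 else 0

theorem collisionIndicator_nonneg {ι κ : Type*} [DecidableEq ι] [DecidableEq κ] (h : ι → κ)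
    (x : Fin 4 → ι) : 0 ≤ collisionIndicator h x := by
  unfold collisionIndicator
  positivity

theorem collisionIndicator_le {ι κ : Type*} [DecidableEq ι] [DecidableEq κ] {h : ι → κ}
    {x : Fin 4 → ι} : collisionIndicator h x ≤ if h (x 0) = h (x 1) then 1 else 0 := by
  unfold collisionIndicator
  split_ifs with hcoll h01 <;> norm_num
  exact h01 hcoll.1.2

/-- The deviation from the identity of the Gram matrix of a sketching matrix `S`, whose smallness
makes `S` approximately preserve matrix products. -/
def gramError {ι κ : Type*} [DecidableEq ι] [Fintype κ] (S : Matrix κ ι ℝ) : Matrix ι ι ℝ :=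
  Sᵀ * S - 1

theorem transpose_mul_gramError_mul {ι κ α β : Type*} [Fintype ι] [DecidableEq ι] [Fintype κ]
    (S : Matrix κ ι ℝ) (A : Matrix ι α ℝ) (B : Matrix ι β ℝ) :
    Aᵀ * gramError S * B = Aᵀ * Sᵀ * S * B - Aᵀ * B := by
  rw [gramError, Matrix.mul_sub, Matrix.sub_mul, Matrix.mul_one, ← Matrix.mul_assoc]

section CountSketch

variable {ι : Type*} [DecidableEq ι] {m : ℕ} {h : ι → Fin m} {v : ι → ℝ}

theorem gramError_countSketch_apply (hv : ∀ i, v i ^ 2 = 1) (i j : ι) :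
    gramError (countSketch h v) i j = if i ≠ j ∧ h i = h j then v i * v j else 0 := by
  simp only [gramError, Matrix.sub_apply, mul_apply, transpose_apply, countSketch, of_apply,
    one_apply, ite_mul, zero_mul, Finset.sum_ite_eq, Finset.mem_univ, if_true]
  rcases eq_or_ne i j with rfl | hij
  · simp [← sq, hv]
  · simp [hij, eq_comm (a := h j)]

theorem gramError_countSketch_mul (hv : ∀ i, v i ^ 2 = 1) (x : Fin 4 → ι) :
    gramError (countSketch h v) (x 0) (x 1) * gramError (countSketch h v) (x 2) (x 3) =
      collisionIndicator h x * ∏ s, v (x s) := by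
  simp only [gramError_countSketch_apply hv, collisionIndicator, Fin.prod_univ_four, ite_and]
  split_ifs <;> ring

end CountSketch

variable {q m : ℕ} [NeZero m] {n : Fin q → ℕ}

theorem gramError_tsMat_mul {h : ∀ k, Fin (n k) → Fin m} {v : ∀ k, Fin (n k) → ℝ}
    (hv : ∀ k i, v k i ^ 2 = 1) (x : Fin 4 → ∀ k, Fin (n k)) :
    gramError (tsMat h v) (x 0) (x 1) * gramError (tsMat h v) (x 2) (x 3) =
      collisionIndicator (hashFam h) x * ∏ k, ∏ s, v k (x s k) := by
  have hprod (i : ∀ k, Fin (n k)) : (∏ k, v k (i k)) ^ 2 = 1 := by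
    simp [← Finset.prod_pow, hv]
  rw [Finset.prod_comm]
  exact gramError_countSketch_mul hprod x

variable {Ω : Type*} [MeasurableSpace Ω] {μ : Measure Ω} [IsProbabilityMeasure μ]
  {H : ∀ k, Ω → Fin (n k) → Fin m} {V : ∀ k, Ω → Fin (n k) → ℝ}

theorem IndepHashSigns.indep {kH kV : ℕ} (hHV : IndepHashSigns μ H V)
    (hH : ∀ k, KWiseIndepHash μ kH (H k)) (hV : ∀ k, KWiseIndepSign μ kV (V k)) :
    iIndepFun H μ ∧ iIndepFun V μ ∧ (fun ω k => H k ω) ⟂ᵢ[μ] (fun ω k => V k ω) := by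
  refine indep_of_measure_fiber_eq_prod (fun k => aemeasurable_pi_lambda _ (hH k).aemeasurable)
    (fun k => aemeasurable_pi_lambda _ (hV k).aemeasurable) (fun k => Set.to_countable _)
    (fun k => ?_) hHV
  refine (Set.Finite.pi' (hV k).finite_range).countable.mono ?_
  rintro _ ⟨ω, rfl⟩ i
  exact ⟨ω, rfl⟩

theorem integrable_comp_hashes {k : ℕ} (hH : ∀ t, KWiseIndepHash μ k (H t))
    (φ : (∀ t, Fin (n t) → Fin m) → ℝ) : Integrable (fun ω => φ fun t => H t ω) μ :=
  Integrable.of_finite.comp_aemeasurable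
    (aemeasurable_pi_lambda _ fun t => aemeasurable_pi_lambda _ (hH t).aemeasurable)

theorem integral_collisionIndicator_le (hH : ∀ k, KWiseIndepHash μ 2 (H k))
    (hind : iIndepFun H μ) (x : Fin 4 → ∀ k, Fin (n k)) :
    ∫ ω, collisionIndicator (hashFam fun k => H k ω) x ∂μ ≤ 1 / m := by
  rcases eq_or_ne (x 0) (x 1) with h01 | h01
  · simp [collisionIndicator, h01]
  have hmeas : AEMeasurable (fun ω k => H k ω) μ :=
    aemeasurable_pi_lambda _ fun k => aemeasurable_pi_lambda _ (hH k).aemeasurable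
  have hnull : NullMeasurableSet
      {ω | hashFam (fun k => H k ω) (x 0) = hashFam (fun k => H k ω) (x 1)} μ :=
    hmeas.nullMeasurableSet_preimage (s := {g | hashFam g (x 0) = hashFam g (x 1)}) .of_discrete
  calc ∫ ω, collisionIndicator (hashFam fun k => H k ω) x ∂μ
      ≤ ∫ ω, if hashFam (fun k => H k ω) (x 0) = hashFam (fun k => H k ω) (x 1) then 1 else 0 ∂μ :=
        integral_mono (integrable_comp_hashes hH fun g => collisionIndicator (hashFam g) x)
          (integrable_comp_hashes hH fun g =>
            if hashFam g (x 0) = hashFam g (x 1) then 1 else 0) fun ω => collisionIndicator_le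
    _ = 1 / m := by
        rw [integral_ite_one_zero hnull, Measure.real, measure_hashFam_eq_hashFam hH hind h01]
        simp

theorem abs_integral_prod_prod_le_prod_pairingCount (hV : ∀ k, KWiseIndepSign μ 4 (V k))
    (hind : iIndepFun V μ) (x : Fin 4 → ∀ k, Fin (n k)) :
    |∫ ω, ∏ k, ∏ s, V k ω (x s k) ∂μ| ≤ ∏ k, pairingCount fun s => x s k := by
  have hmeas (k : Fin q) : AEMeasurable (V k) μ := aemeasurable_pi_lambda _ (hV k).aemeasurable
  have hprod (k : Fin q) : Measurable fun v : Fin (n k) → ℝ => ∏ s, v (x s k) := by fun_prop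
  have hfactor : ∫ ω, ∏ k, ∏ s, V k ω (x s k) ∂μ = ∏ k, ∫ ω, ∏ s, V k ω (x s k) ∂μ :=
    hind.integral_fun_prod_comp hmeas fun k => (hprod k).aestronglyMeasurable
  rw [hfactor, Finset.abs_prod]
  exact Finset.prod_le_prod (fun k _ => abs_nonneg _)
    fun k _ => (hV k).abs_integral_prod_le_pairingCount _

theorem aestronglyMeasurable_prod_prod {k : ℕ} (hV : ∀ t, KWiseIndepSign μ k (V t))
    (x : Fin 4 → ∀ t, Fin (n t)) :
    AEStronglyMeasurable (fun ω => ∏ t, ∏ s, V t ω (x s t)) μ :=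
  (Finset.aemeasurable_fun_prod _ fun t _ => Finset.aemeasurable_fun_prod _ fun s _ =>
    (hV t).aemeasurable (x s t)).aestronglyMeasurable

theorem integrable_gramError_mul {kH kV : ℕ} (hH : ∀ k, KWiseIndepHash μ kH (H k))
    (hV : ∀ k, KWiseIndepSign μ kV (V k)) (x : Fin 4 → ∀ k, Fin (n k)) :
    Integrable (fun ω => gramError (tsMat (H · ω) (V · ω)) (x 0) (x 1) *
      gramError (tsMat (H · ω) (V · ω)) (x 2) (x 3)) μ := by
  have hcoll := integrable_comp_hashes hH fun g => collisionIndicator (hashFam g) x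
  have hsign_norm (ω : Ω) : ‖∏ k, ∏ s, V k ω (x s k)‖ ≤ 1 := by
    simp [norm_prod, (hV _).abs_eq_one]
  simp only [gramError_tsMat_mul fun k => (hV k).sq_eq_one _]
  exact hcoll.mul_bdd (aestronglyMeasurable_prod_prod hV x) (.of_forall hsign_norm)

theorem abs_integral_gramError_mul_le (hH : ∀ k, KWiseIndepHash μ 2 (H k))
    (hV : ∀ k, KWiseIndepSign μ 4 (V k)) (hHV : IndepHashSigns μ H V)
    (x : Fin 4 → ∀ k, Fin (n k)) :
    |∫ ω, gramError (tsMat (H · ω) (V · ω)) (x 0) (x 1) *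
      gramError (tsMat (H · ω) (V · ω)) (x 2) (x 3) ∂μ| ≤
      1 / m * ∏ k, pairingCount fun s => x s k := by
  obtain ⟨hindH, hindV, hindHV⟩ := hHV.indep hH hV
  have hcoll : Measurable fun g : ∀ k, Fin (n k) → Fin m => collisionIndicator (hashFam g) x :=
    .of_discrete
  have hsign : Measurable fun w : ∀ k, Fin (n k) → ℝ => ∏ k, ∏ s, w k (x s k) := by fun_prop
  have hsplit : ∫ ω, collisionIndicator (hashFam (H · ω)) x * ∏ k, ∏ s, V k ω (x s k) ∂μ =
      (∫ ω, collisionIndicator (hashFam (H · ω)) x ∂μ) * ∫ ω, ∏ k, ∏ s, V k ω (x s k) ∂μ :=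
    (hindHV.comp hcoll hsign).integral_fun_mul_eq_mul_integral
      (integrable_comp_hashes hH fun g => collisionIndicator (hashFam g) x).aestronglyMeasurable
      (aestronglyMeasurable_prod_prod hV x)
  simp only [gramError_tsMat_mul fun k => (hV k).sq_eq_one _]
  rw [hsplit, abs_mul, abs_of_nonneg (integral_nonneg fun ω => collisionIndicator_nonneg _ _)]
  exact mul_le_mul (integral_collisionIndicator_le hH hindH x)
    (abs_integral_prod_prod_le_prod_pairingCount hV hindV x) (abs_nonneg _) (by positivity)

theorem tensorSketch_approx_matrix_product_general {α β : Type*} [Fintype α] [Fintype β]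
    (hH : ∀ k, KWiseIndepHash μ 2 (H k)) (hV : ∀ k, KWiseIndepSign μ 4 (V k))
    (hHV : IndepHashSigns μ H V) (A : Matrix (∀ k, Fin (n k)) α ℝ)
    (B : Matrix (∀ k, Fin (n k)) β ℝ) {ε₀ δ₀ : ℝ} (hε₀ : 0 < ε₀) (hδ₀ : 0 < δ₀)
    (hm : (3 ^ q : ℝ) / (ε₀ ^ 2 * δ₀) ≤ (m : ℝ)) :
    1 - δ₀ ≤ μ.real {ω | frobSq (Aᵀ * (tsMat (H · ω) (V · ω))ᵀ * tsMat (H · ω) (V · ω) * B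
      - Aᵀ * B) ≤ ε₀ ^ 2 * frobSq A * frobSq B} := by
  have hm0 : (0 : ℝ) < m := Nat.cast_pos.2 (NeZero.pos m)
  have hkernel : IsL2Bounded
      (fun x : Fin 4 → ∀ k, Fin (n k) => 1 / m * ∏ k, pairingCount fun s => x s k)
      (1 / m * 3 ^ q) := by
    simpa using (IsL2Bounded.pi (fun k => isL2Bounded_pairingCount (α := Fin (n k)))
      (fun k => pairingCount_nonneg) fun _ => zero_le_three).const_mul (one_div_nonneg.2 hm0.le)
  have hconst : 1 / m * 3 ^ q ≤ δ₀ * ε₀ ^ 2 := by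
    rw [div_le_iff₀ (by positivity)] at hm
    rw [one_div_mul_eq_div, div_le_iff₀ hm0]
    linarith
  have hFF : 0 ≤ frobSq A * frobSq B := mul_nonneg (frobSq_nonneg A) (frobSq_nonneg B)
  have hint := integrable_gramError_mul hH hV
  simp only [← transpose_mul_gramError_mul]
  refine one_sub_le_measureReal_le_of_integral_le (fun ω => frobSq_nonneg _)
    (integrable_frobSq_transpose_mul_mul A B hint) hδ₀.le
    (by rw [mul_assoc]; exact mul_nonneg (sq_nonneg _) hFF) ?_
  calc ∫ ω, frobSq (Aᵀ * gramError (tsMat (H · ω) (V · ω)) * B) ∂μ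
      ≤ 1 / m * 3 ^ q * (frobSq A * frobSq B) :=
        integral_frobSq_transpose_mul_mul_le A B hint hkernel
          (abs_integral_gramError_mul_le hH hV hHV)
    _ ≤ δ₀ * ε₀ ^ 2 * (frobSq A * frobSq B) := mul_le_mul_of_nonneg_right hconst hFF
    _ = δ₀ * (ε₀ ^ 2 * frobSq A * frobSq B) := by ring

end TensorSketch

/-- Lemma 4.1, approximate matrix product for TensorSketch: for a random
TensorSketch matrix `S ∈ ℝ^{m × n₁⋯n_q}` generated by mutually independent 3-wise
independent hash maps `h_i` and mutually independent 4-wise independent sign functions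
`v_i` (all mutually independent), and fixed matrices `A, B` with `n₁⋯n_q` rows, if
`m ≥ (2 + 3^q)/(ε₀² δ₀)` then
`Pr[‖Aᵀ Sᵀ S B - Aᵀ B‖_F² ≤ ε₀² ‖A‖_F² ‖B‖_F²] ≥ 1 - δ₀`. -/
theorem tensorSketch_approx_matrix_product
    {Ω : Type*} [MeasurableSpace Ω] (μ : Measure Ω) [IsProbabilityMeasure μ]
    {q m : ℕ} [NeZero m] {n : Fin q → ℕ} {nc nc' : ℕ}
    (H : ∀ k, Ω → Fin (n k) → Fin m) (V : ∀ k, Ω → Fin (n k) → ℝ)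
    (h3 : ∀ k, KWiseIndepHash μ 3 (H k))
    (h4 : ∀ k, KWiseIndepSign μ 4 (V k))
    (hmut : IndepHashSigns μ H V)
    (A : Matrix (∀ k, Fin (n k)) (Fin nc) ℝ) (B : Matrix (∀ k, Fin (n k)) (Fin nc') ℝ)
    (ε₀ δ₀ : ℝ) (hε₀ : 0 < ε₀) (hδ₀ : 0 < δ₀)
    (hm : (2 + 3 ^ q : ℝ) / (ε₀ ^ 2 * δ₀) ≤ (m : ℝ)) :
    1 - δ₀ ≤ (μ {ω |
      frobSq (Aᵀ * (tsMat (fun k => H k ω) (fun k => V k ω))ᵀ *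
          tsMat (fun k => H k ω) (fun k => V k ω) * B - Aᵀ * B) ≤
        ε₀ ^ 2 * frobSq A * frobSq B}).toReal :=
  tensorSketch_approx_matrix_product_general (fun k => (h3 k).mono (Nat.le_succ 2)) h4 hmut A B
    hε₀ hδ₀ <| (div_le_div_of_nonneg_right (by norm_num) (by positivity)).trans hm
end
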